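/- Let k ≥ 0 and let λ1, λ2, λ3, μ1, μ2, μ3 be positive real numbers such that λ1+λ2+λ3 ≤ μ1+μ2+μ3, λ1λ2+λ1λ3+λ2λ3 ≤ μ1μ2+μ1μ3+μ2μ3, and λ1λ2λ3 = μ1μ2μ3. Then exp(k·((log λ1)²+(log λ2)²+(log λ3)² − (1/3)·(log(λ1λ2λ3))²)) ≤ exp(k·((log μ1)²+(log μ2)²+(log μ3)² − (1/3)·(log(μ1μ2μ3))²)). -/

import Mathlib

open MeasureTheory Filter Topology in
/-- The correction term `log (1 + e^{-|u|})` is integrable on the line. -/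
theorem aux_integrable : Integrable (fun u : ℝ => Real.log (1 + Real.exp (-|u|))) := by
  have hE : Integrable (fun u : ℝ => Real.exp (-|u|)) := by
    rw [← integrableOn_univ, ← Set.Iic_union_Ioi (a := (0 : ℝ))]
    refine IntegrableOn.union ?_ ?_
    · refine (integrableOn_exp_Iic 0).congr_fun ?_ measurableSet_Iic
      intro x hx
      simp [abs_of_nonpos (Set.mem_Iic.1 hx)]
    · refine (integrableOn_exp_neg_Ioi 0).congr_fun ?_ measurableSet_Ioi
      intro x hx
      simp [abs_of_pos (Set.mem_Ioi.1 hx)]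
  refine hE.mono' ?_ ?_
  · apply Continuous.aestronglyMeasurable
    refine Continuous.log (by fun_prop) ?_
    intro x
    positivity
  · refine Eventually.of_forall ?_
    intro x
    have hp := Real.exp_pos (-|x|)
    rw [Real.norm_of_nonneg (Real.log_nonneg (by linarith))]
    have := Real.log_le_sub_one_of_pos (show 0 < 1 + Real.exp (-|x|) by linarith)
    linarith

theorem aux_log (y s : ℝ) :
    Real.log (Real.exp s + Real.exp y) =
      max s y + Real.log (1 + Real.exp (-|s - y|)) := by
  have hp := Real.exp_pos (-|s - y|)
  rw [← Real.log_exp (max s y), ← Real.log_mul (Real.exp_pos _).ne' (by positivity),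
    mul_add, mul_one, ← Real.exp_add]
  rcases le_total s y with h | h
  · rw [max_eq_right h, abs_of_nonpos (by linarith)]
    rw [show y + -(-(s - y)) = s by ring, add_comm]
  · rw [max_eq_left h, abs_of_nonneg (by linarith)]
    rw [show s + -(s - y) = y by ring]

theorem aux_max (y S : ℝ) (h : |y| ≤ S) :
    ∫ s in (-S)..S, max s y = y ^ 2 / 2 + y * S + S ^ 2 / 2 := by
  obtain ⟨ha, hb⟩ := abs_le.1 h
  have hc : Continuous (fun s : ℝ => max s y) := by fun_prop
  rw [← intervalIntegral.integral_add_adjacent_intervals (b := y)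
    (hc.intervalIntegrable _ _) (hc.intervalIntegrable _ _)]
  have e1 : ∫ s in (-S)..y, max s y = ∫ s in (-S)..y, y := by
    apply intervalIntegral.integral_congr
    intro s hs
    rw [Set.uIcc_of_le ha] at hs
    exact max_eq_right hs.2
  have e2 : ∫ s in y..S, max s y = ∫ s in y..S, s := by
    apply intervalIntegral.integral_congr
    intro s hs
    rw [Set.uIcc_of_le hb] at hs
    exact max_eq_left hs.1
  rw [e1, e2, intervalIntegral.integral_const, integral_id, smul_eq_mul]
  ring

theorem aux_cont (x : ℝ) (hx : 0 < x) : Continuous (fun s : ℝ => Real.log (Real.exp s + x)) := by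
  refine Continuous.log (by fun_prop) ?_
  intro s
  positivity

open MeasureTheory Filter Topology in
theorem aux_tendsto (x : ℝ) (hx : 0 < x) :
    Tendsto (fun S : ℝ => (∫ s in (-S)..S, Real.log (Real.exp s + x)) - Real.log x * S - S ^ 2 / 2)
      atTop (𝓝 (Real.log x ^ 2 / 2 + ∫ u : ℝ, Real.log (1 + Real.exp (-|u|)))) := by
  set y := Real.log x with hy
  have hxy : x = Real.exp y := (Real.exp_log hx).symm
  have ht : Tendsto (fun S : ℝ => ∫ u in (-S - y)..(S - y), Real.log (1 + Real.exp (-|u|))) atTop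
      (𝓝 (∫ u : ℝ, Real.log (1 + Real.exp (-|u|)))) := by
    apply intervalIntegral_tendsto_integral aux_integrable
    · exact tendsto_atBot_add_const_right _ (-y) tendsto_neg_atTop_atBot
    · exact tendsto_atTop_add_const_right _ (-y) tendsto_id
  refine (ht.const_add (y ^ 2 / 2)).congr' ?_
  filter_upwards [eventually_ge_atTop |y|] with S hS
  have hc : Continuous (fun s : ℝ => Real.log (1 + Real.exp (-|s - y|))) := by
    refine Continuous.log (by fun_prop) ?_
    intro s
    positivity
  have hm : Continuous (fun s : ℝ => max s y) := by fun_prop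
  rw [hxy]
  simp_rw [aux_log]
  rw [intervalIntegral.integral_add (hm.intervalIntegrable _ _) (hc.intervalIntegrable _ _),
    aux_max y S hS,
    intervalIntegral.integral_comp_sub_right (fun u => Real.log (1 + Real.exp (-|u|))) y]
  ring

open MeasureTheory Filter Topology in
/-- The sum of squared logarithms inequality for `n = 3`. -/
theorem aux_main (l1 l2 l3 m1 m2 m3 : ℝ)
    (hl1 : 0 < l1) (hl2 : 0 < l2) (hl3 : 0 < l3)
    (hm1 : 0 < m1) (hm2 : 0 < m2) (hm3 : 0 < m3)
    (h1 : l1 + l2 + l3 ≤ m1 + m2 + m3)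
    (h2 : l1 * l2 + l1 * l3 + l2 * l3 ≤ m1 * m2 + m1 * m3 + m2 * m3)
    (h3 : l1 * l2 * l3 = m1 * m2 * m3) :
    (Real.log l1) ^ 2 + (Real.log l2) ^ 2 + (Real.log l3) ^ 2 ≤
      (Real.log m1) ^ 2 + (Real.log m2) ^ 2 + (Real.log m3) ^ 2 := by
  have hlog : Real.log l1 + Real.log l2 + Real.log l3
      = Real.log m1 + Real.log m2 + Real.log m3 := by
    rw [← Real.log_mul hl1.ne' hl2.ne', ← Real.log_mul (by positivity) hl3.ne', h3,
      Real.log_mul (by positivity) hm3.ne', Real.log_mul hm1.ne' hm2.ne']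
  have tl := ((aux_tendsto l1 hl1).add (aux_tendsto l2 hl2)).add (aux_tendsto l3 hl3)
  have tm := ((aux_tendsto m1 hm1).add (aux_tendsto m2 hm2)).add (aux_tendsto m3 hm3)
  have key := le_of_tendsto_of_tendsto tl tm ?_
  · linarith
  filter_upwards [eventually_ge_atTop (0 : ℝ)] with S hS
  have ii : ∀ x : ℝ, 0 < x → IntervalIntegrable (fun s : ℝ => Real.log (Real.exp s + x))
      volume (-S) S := fun x hx => (aux_cont x hx).intervalIntegrable _ _
  have hint : (∫ s in (-S)..S, (Real.log (Real.exp s + l1) + Real.log (Real.exp s + l2)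
        + Real.log (Real.exp s + l3))) ≤
      ∫ s in (-S)..S, (Real.log (Real.exp s + m1) + Real.log (Real.exp s + m2)
        + Real.log (Real.exp s + m3)) := by
    apply intervalIntegral.integral_mono_on (by linarith)
    · exact ((ii _ hl1).add (ii _ hl2)).add (ii _ hl3)
    · exact ((ii _ hm1).add (ii _ hm2)).add (ii _ hm3)
    intro s _
    have hp := Real.exp_pos s
    generalize Real.exp s = t at hp
    rw [← Real.log_mul (by positivity) (by positivity),
      ← Real.log_mul (by positivity) (by positivity),
      ← Real.log_mul (by positivity) (by positivity),
      ← Real.log_mul (by positivity) (by positivity)]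
    apply Real.log_le_log (by positivity)
    have a1 := mul_le_mul_of_nonneg_left h1 (sq_nonneg t)
    have a2 := mul_le_mul_of_nonneg_left h2 hp.le
    linarith
  rw [intervalIntegral.integral_add ((ii _ hl1).add (ii _ hl2)) (ii _ hl3),
    intervalIntegral.integral_add (ii _ hl1) (ii _ hl2),
    intervalIntegral.integral_add ((ii _ hm1).add (ii _ hm2)) (ii _ hm3),
    intervalIntegral.integral_add (ii _ hm1) (ii _ hm2)] at hint
  have hS2 : (Real.log l1 + Real.log l2 + Real.log l3) * S
      = (Real.log m1 + Real.log m2 + Real.log m3) * S := by rw [hlog]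
  linarith

theorem exp_dev3_hencky_monotone
    (k l1 l2 l3 m1 m2 m3 : ℝ) (hk : 0 ≤ k)
    (hl1 : 0 < l1) (hl2 : 0 < l2) (hl3 : 0 < l3)
    (hm1 : 0 < m1) (hm2 : 0 < m2) (hm3 : 0 < m3)
    (h1 : l1 + l2 + l3 ≤ m1 + m2 + m3)
    (h2 : l1 * l2 + l1 * l3 + l2 * l3 ≤ m1 * m2 + m1 * m3 + m2 * m3)
    (h3 : l1 * l2 * l3 = m1 * m2 * m3) :
    Real.exp (k * ((Real.log l1) ^ 2 + (Real.log l2) ^ 2 + (Real.log l3) ^ 2 -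
        (1 / 3) * (Real.log (l1 * l2 * l3)) ^ 2)) ≤
      Real.exp (k * ((Real.log m1) ^ 2 + (Real.log m2) ^ 2 + (Real.log m3) ^ 2 -
        (1 / 3) * (Real.log (m1 * m2 * m3)) ^ 2)) := by
  have h := aux_main l1 l2 l3 m1 m2 m3 hl1 hl2 hl3 hm1 hm2 hm3 h1 h2 h3
  rw [h3]
  exact Real.exp_le_exp.2 (mul_le_mul_of_nonneg_left (by linarith) hk)
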